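/- Let λ_1 > λ_2 > … > 0 be a strictly decreasing positive sequence satisfying the spacing condition. Then there is a finite constant C such that for every κ_0 ≥ 1 and every fixed k with 1 ≤ k ≤ κ_0, Σ_{r=1, r ≠ k}^{κ_0} λ_r (λ_k − λ_r)^{-2} ≤ C λ_{κ_0}^{-2} κ_0^2 Σ_{r=1}^{κ_0} λ_r. -/

import Mathlib

open Filter

/-!
For a decreasing positive sequence the gap `|λ_k - λ_r|` with `k, r ≤ n` is at least the gap between
two neighbours `λ_i > λ_{i+1}` with `i + 1 ≤ n`, so only the spacing of neighbours matters: it gives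
`|λ_k - λ_r|⁻¹ ≤ C₀ (i + 1) / λ_i ≤ C₀ n / λ_n`. Squaring this uniform bound, multiplying by `λ_r`
and summing over `r ≠ k` proves the claim with `C = C₀²`.
-/

section OrderedField

variable {K : Type*} [Field K] [LinearOrder K] [IsStrictOrderedRing K]

theorem sum_erase_div_sub_sq_le {ι : Type*} [DecidableEq ι] {s : Finset ι} {f : ι → K} {k : ι}
    {B : K} (hf : ∀ r ∈ s, 0 ≤ f r) (hB : ∀ r ∈ s, r ≠ k → |f k - f r|⁻¹ ≤ B) :
    ∑ r ∈ s.erase k, f r / (f k - f r) ^ 2 ≤ B ^ 2 * ∑ r ∈ s, f r := by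
  have hterm : ∀ r ∈ s.erase k, f r / (f k - f r) ^ 2 ≤ B ^ 2 * f r := by
    intro r hr
    obtain ⟨hrk, hrs⟩ := Finset.mem_erase.1 hr
    have hfr := hf r hrs
    calc f r / (f k - f r) ^ 2 = |f k - f r|⁻¹ ^ 2 * f r := by
          rw [inv_pow, sq_abs, div_eq_inv_mul]
      _ ≤ B ^ 2 * f r := by gcongr; exact hB r hrs hrk
  calc ∑ r ∈ s.erase k, f r / (f k - f r) ^ 2 ≤ ∑ r ∈ s.erase k, B ^ 2 * f r :=
        Finset.sum_le_sum hterm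
    _ ≤ ∑ r ∈ s, B ^ 2 * f r :=
        Finset.sum_le_sum_of_subset_of_nonneg (Finset.erase_subset k s)
          fun r hr _ => mul_nonneg (sq_nonneg B) (hf r hr)
    _ = B ^ 2 * ∑ r ∈ s, f r := (Finset.mul_sum ..).symm

theorem div_sub_succ_le_of_max_div_abs_sub_le {lam : ℕ → K} {C₀ : K} {k : ℕ}
    (hle : lam (k + 1) ≤ lam k)
    (hspacing : max (lam k) (lam (k + 1)) / |lam k - lam (k + 1)|
      ≤ C₀ * max (k : K) ((k + 1 : ℕ) : K) / |(k : K) - ((k + 1 : ℕ) : K)|) :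
    lam k / (lam k - lam (k + 1)) ≤ C₀ * (k + 1) := by
  simpa [max_eq_left hle, abs_of_nonneg (sub_nonneg.2 hle)] using hspacing

section ConsecutiveSpacing

variable {lam : ℕ → K} {C₀ : K} {n : ℕ}

theorem inv_sub_le_of_div_sub_succ_le (hpos : ∀ r, 1 ≤ r → 0 < lam r)
    (hanti : StrictAntiOn lam (Set.Ici 1))
    (hgap : ∀ i, 1 ≤ i → lam i / (lam i - lam (i + 1)) ≤ C₀ * (i + 1))
    {i j : ℕ} (hi : 1 ≤ i) (hij : i < j) (hjn : j ≤ n) :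
    (lam i - lam j)⁻¹ ≤ C₀ * n * (lam n)⁻¹ := by
  have mem_Ici {m : ℕ} (hm : i ≤ m) : m ∈ Set.Ici 1 := hi.trans hm
  have hi_pos : 0 < lam i := hpos i hi
  have hn_pos : 0 < lam n := hpos n (mem_Ici (hij.le.trans hjn))
  have hneighbour : 0 < lam i - lam (i + 1) :=
    sub_pos.2 (hanti hi (mem_Ici i.le_succ) i.lt_succ_self)
  have hj_le : lam j ≤ lam (i + 1) := hanti.antitoneOn (mem_Ici i.le_succ) (mem_Ici hij.le) hij
  have hn_le : lam n ≤ lam i := hanti.antitoneOn hi (mem_Ici (hij.le.trans hjn)) (hij.le.trans hjn)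
  have hin : (i : K) + 1 ≤ n := by exact_mod_cast hij.trans_le hjn
  have hC₀ : 0 ≤ C₀ :=
    (pos_of_mul_pos_left ((div_pos hi_pos hneighbour).trans_le (hgap i hi)) (by positivity)).le
  calc (lam i - lam j)⁻¹ ≤ (lam i - lam (i + 1))⁻¹ := by gcongr
    _ = lam i / (lam i - lam (i + 1)) * (lam i)⁻¹ := by field_simp
    _ ≤ C₀ * (i + 1) * (lam i)⁻¹ := by gcongr; exact hgap i hi
    _ ≤ C₀ * n * (lam n)⁻¹ := by gcongr

theorem inv_abs_sub_le_of_div_sub_succ_le (hpos : ∀ r, 1 ≤ r → 0 < lam r)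
    (hanti : StrictAntiOn lam (Set.Ici 1))
    (hgap : ∀ i, 1 ≤ i → lam i / (lam i - lam (i + 1)) ≤ C₀ * (i + 1))
    {k r : ℕ} (hk : k ∈ Finset.Icc 1 n) (hr : r ∈ Finset.Icc 1 n) (hrk : r ≠ k) :
    |lam k - lam r|⁻¹ ≤ C₀ * n * (lam n)⁻¹ := by
  wlog hlt : k < r generalizing k r
  · rw [abs_sub_comm]
    exact this hr hk hrk.symm (hrk.lt_of_le (not_lt.1 hlt))
  obtain ⟨hk_one, -⟩ := Finset.mem_Icc.1 hk
  obtain ⟨hr_one, hrn⟩ := Finset.mem_Icc.1 hr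
  rw [abs_of_pos (sub_pos.2 (hanti hk_one hr_one hlt))]
  exact inv_sub_le_of_div_sub_succ_le hpos hanti hgap hk_one hlt hrn

theorem quadratic_inference_truncated_spacing_sum_bound_general
    (hpos : ∀ r, 1 ≤ r → 0 < lam r) (hanti : StrictAntiOn lam (Set.Ici 1))
    (hgap : ∀ i, 1 ≤ i → lam i / (lam i - lam (i + 1)) ≤ C₀ * (i + 1))
    {k : ℕ} (hk : k ∈ Finset.Icc 1 n) :
    ∑ r ∈ (Finset.Icc 1 n).erase k, lam r / (lam k - lam r) ^ 2
      ≤ C₀ ^ 2 * ((lam n)⁻¹) ^ 2 * (n : K) ^ 2 * ∑ r ∈ Finset.Icc 1 n, lam r := by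
  calc ∑ r ∈ (Finset.Icc 1 n).erase k, lam r / (lam k - lam r) ^ 2
      ≤ (C₀ * n * (lam n)⁻¹) ^ 2 * ∑ r ∈ Finset.Icc 1 n, lam r :=
        sum_erase_div_sub_sq_le (fun r hr => (hpos r (Finset.mem_Icc.1 hr).1).le)
          fun _ hr hrk => inv_abs_sub_le_of_div_sub_succ_le hpos hanti hgap hk hr hrk
    _ = C₀ ^ 2 * ((lam n)⁻¹) ^ 2 * (n : K) ^ 2 * ∑ r ∈ Finset.Icc 1 n, lam r := by ring

end ConsecutiveSpacing

end OrderedField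

/-- inequality (A.10) of the paper.
If `λ_1 > λ_2 > … > 0` satisfies the eigenvalue spacing condition, then there
is a finite constant `C` such that for every `κ₀ ≥ 1` and every `k` with
`1 ≤ k ≤ κ₀`, `∑_{r=1, r≠k}^{κ₀} λ_r (λ_k − λ_r)^{-2}
  ≤ C λ_{κ₀}^{-2} κ₀² ∑_{r=1}^{κ₀} λ_r`. -/
theorem quadratic_inference_truncated_spacing_sum_bound
    (lam : ℕ → ℝ) (C₀ : ℝ) (hC₀ : 0 < C₀)
    (hpos : ∀ r : ℕ, 1 ≤ r → 0 < lam r)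
    (hanti : ∀ r s : ℕ, 1 ≤ r → r < s → lam s < lam r)
    (hspacing : ∀ k r : ℕ, 1 ≤ k → 1 ≤ r → k ≠ r →
      max (lam k) (lam r) / |lam k - lam r|
        ≤ C₀ * (max k r : ℝ) / |(k : ℝ) - (r : ℝ)|) :
    ∃ C : ℝ, ∀ κ₀ k : ℕ, 1 ≤ k → k ≤ κ₀ →
      ∑ r ∈ (Finset.Icc 1 κ₀).erase k, lam r / (lam k - lam r) ^ 2
        ≤ C * ((lam κ₀)⁻¹) ^ 2 * (κ₀ : ℝ) ^ 2 * ∑ r ∈ Finset.Icc 1 κ₀, lam r := by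
  exact ⟨C₀ ^ 2, fun κ₀ k hk hkκ₀ => quadratic_inference_truncated_spacing_sum_bound_general hpos
    (fun r hr s _ hrs => hanti r s hr hrs)
    (fun i hi => div_sub_succ_le_of_max_div_abs_sub_le (hanti i (i + 1) hi i.lt_succ_self).le
      (hspacing i (i + 1) hi i.succ_pos i.lt_succ_self.ne))
    (Finset.mem_Icc.2 ⟨hk, hkκ₀⟩)⟩
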